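/- arXiv:1612.06541 — 3 statements merged into one kernel-verified Lean document; each statement's English description precedes it below -/
import Mathlib

section
/- Let (Σ₀, R) be a string rewriting system. If every critical branching of R is joinable (i.e., for every critical branching (f, g) the targets of f and g have a common reduct under the reflexive-transitive closure of →_R), then the one-step rewriting relation →_R is locally confluent: for any two rewriting steps with the same source, their targets have a common reduct. -/
open Relation

/-- A rewriting step `(u, r, v)` of a string rewriting system `R` over the free monoid on `α`:
`u` and `v` are the context words and `r = (a, b)` is a rule of `R`. -/
structure Step {α : Type*} (R : Set (FreeMonoid α × FreeMonoid α)) where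
  left : FreeMonoid α
  rule : FreeMonoid α × FreeMonoid α
  right : FreeMonoid α
  rule_mem : rule ∈ R

namespace Step

variable {α : Type*} {R : Set (FreeMonoid α × FreeMonoid α)}

/-- The source `u·a·v` of the rewriting step `(u, (a,b), v)`. -/
def src (f : Step R) : FreeMonoid α := f.left * f.rule.1 * f.right

/-- The target `u·b·v` of the rewriting step `(u, (a,b), v)`. -/
def tgt (f : Step R) : FreeMonoid α := f.left * f.rule.2 * f.right

/-- The whiskered step `u·(p, r, q)·v = (u·p, r, q·v)`. -/
def whisker (u : FreeMonoid α) (f : Step R) (v : FreeMonoid α) : Step R :=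
  ⟨u * f.left, f.rule, f.right * v, f.rule_mem⟩

end Step

/-- The one-step rewriting relation `→_R`. -/
def RwStep {α : Type*} (R : Set (FreeMonoid α × FreeMonoid α)) (x y : FreeMonoid α) : Prop :=
  ∃ f : Step R, f.src = x ∧ f.tgt = y

/-- Two words are joinable if they have a common reduct under `→*_R`. -/
def Joinable {α : Type*} (R : Set (FreeMonoid α × FreeMonoid α)) (y z : FreeMonoid α) : Prop :=
  ∃ w, ReflTransGen (RwStep R) y w ∧ ReflTransGen (RwStep R) z w

/-- `(f, g)` is a Peiffer branching in the given order: the common source factors as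
`u·a·v·b·w` with `f = (u, (a,a'), v·b·w)` and `g = (u·a·v, (b,b'), w)`. -/
def PeifferOriented {α : Type*} {R : Set (FreeMonoid α × FreeMonoid α)}
    (f g : Step R) : Prop :=
  ∃ v : FreeMonoid α, g.left = f.left * f.rule.1 * v ∧ f.right = v * g.rule.1 * g.right

/-- A Peiffer branching, up to permutation of the two steps. -/
def Peiffer {α : Type*} {R : Set (FreeMonoid α × FreeMonoid α)} (f g : Step R) : Prop :=
  PeifferOriented f g ∨ PeifferOriented g f

/-- An overlapping branching: a local branching that is neither aspherical nor Peiffer. -/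
def Overlapping {α : Type*} {R : Set (FreeMonoid α × FreeMonoid α)} (f g : Step R) : Prop :=
  f.src = g.src ∧ f ≠ g ∧ ¬ Peiffer f g

/-- The order on local branchings generated by `(f, g) ≤ (u·f·v, u·g·v)`. -/
def BranchLE {α : Type*} {R : Set (FreeMonoid α × FreeMonoid α)}
    (p q : Step R × Step R) : Prop :=
  ∃ u v : FreeMonoid α, q.1 = Step.whisker u p.1 v ∧ q.2 = Step.whisker u p.2 v

/-- A critical branching: an overlapping branching that is minimal for the order `BranchLE`. -/
def Critical {α : Type*} {R : Set (FreeMonoid α × FreeMonoid α)} (f g : Step R) : Prop :=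
  Overlapping f g ∧
    ∀ f' g' : Step R, Overlapping f' g' → BranchLE (f', g') (f, g) → (f', g') = (f, g)

theorem RwStep.whisk {α : Type*} {R : Set (FreeMonoid α × FreeMonoid α)} (u v : FreeMonoid α)
    {x y : FreeMonoid α} (h : RwStep R x y) : RwStep R (u * x * v) (u * y * v) := by
  obtain ⟨f, rfl, rfl⟩ := h
  exact ⟨f.whisker u v, by simp [Step.src, Step.whisker, mul_assoc],
    by simp [Step.tgt, Step.whisker, mul_assoc]⟩

theorem Joinable.whisk {α : Type*} {R : Set (FreeMonoid α × FreeMonoid α)} (u v : FreeMonoid α)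
    {x y : FreeMonoid α} (h : Joinable R x y) : Joinable R (u * x * v) (u * y * v) := by
  obtain ⟨w, h1, h2⟩ := h
  exact ⟨u * w * v, Relation.ReflTransGen.lift (fun x => u * x * v) (fun _ _ => RwStep.whisk u v) _ _ h1,
    Relation.ReflTransGen.lift (fun x => u * x * v) (fun _ _ => RwStep.whisk u v) _ _ h2⟩

theorem Joinable.swap {α : Type*} {R : Set (FreeMonoid α × FreeMonoid α)}
    {x y : FreeMonoid α} (h : Joinable R x y) : Joinable R y x := by
  obtain ⟨w, h1, h2⟩ := h
  exact ⟨w, h2, h1⟩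

theorem PeifferOriented.joinable {α : Type*} {R : Set (FreeMonoid α × FreeMonoid α)}
    {f g : Step R} (h : PeifferOriented f g) : Joinable R f.tgt g.tgt := by
  obtain ⟨v, h1, h2⟩ := h
  refine ⟨f.left * f.rule.2 * v * g.rule.2 * g.right, .single ?_, .single ?_⟩
  · exact ⟨⟨f.left * f.rule.2 * v, g.rule, g.right, g.rule_mem⟩,
      by simp [Step.src, Step.tgt, h2, mul_assoc], by simp [Step.tgt, mul_assoc]⟩
  · exact ⟨⟨f.left, f.rule, v * g.rule.2 * g.right, f.rule_mem⟩,
      by simp [Step.src, Step.tgt, h1, mul_assoc], by simp [Step.tgt, mul_assoc]⟩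

theorem Step.src_whisker {α : Type*} {R : Set (FreeMonoid α × FreeMonoid α)}
    (u v : FreeMonoid α) (f : Step R) : (f.whisker u v).src = u * f.src * v := by
  simp [Step.src, Step.whisker, mul_assoc]

theorem Step.tgt_whisker {α : Type*} {R : Set (FreeMonoid α × FreeMonoid α)}
    (u v : FreeMonoid α) (f : Step R) : (f.whisker u v).tgt = u * f.tgt * v := by
  simp [Step.tgt, Step.whisker, mul_assoc]

/-- If every critical branching is joinable, then `→_R` is locally confluent. -/
theorem local_confluence_of_critical_joinable {α : Type*}
    (R : Set (FreeMonoid α × FreeMonoid α))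
    (hcrit : ∀ f g : Step R, Critical f g → Joinable R f.tgt g.tgt) :
    ∀ f g : Step R, f.src = g.src → Joinable R f.tgt g.tgt := by
  intro f
  induction hn : f.src.length using Nat.strong_induction_on generalizing f with
  | _ n ih =>
  intro g hfg
  by_cases heq : f = g
  · subst heq
    exact ⟨_, .refl, .refl⟩
  by_cases hp : Peiffer f g
  · rcases hp with hp | hp
    · exact hp.joinable
    · exact hp.joinable.swap
  by_cases hc : Critical f g
  · exact hcrit f g hc
  have ho : Overlapping f g := ⟨hfg, heq, hp⟩
  simp only [Critical, ho, true_and, not_forall] at hc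
  obtain ⟨f', g', ho', ⟨u, v, hu, hv⟩, hne⟩ := hc
  dsimp only at hu hv
  subst hu hv
  rw [Step.tgt_whisker, Step.tgt_whisker]
  apply Joinable.whisk
  refine ih f'.src.length ?_ f' rfl g' ho'.1
  rw [← hn, Step.src_whisker, FreeMonoid.length_mul, FreeMonoid.length_mul]
  by_contra hlt
  have h1 : u = 1 := FreeMonoid.length_eq_zero.1 (by omega)
  have h2 : v = 1 := FreeMonoid.length_eq_zero.1 (by omega)
  subst h1 h2
  exact hne (by simp [Step.whisker])
end

section
/- Let (Σ₀, R) be a string rewriting system. If →_R is terminating (there is no infinite sequence of rewriting steps x₀ →_R x₁ →_R x₂ →_R ⋯) and every critical branching of R is joinable, then →_R is confluent: for any words x, y, z with x →*_R y and x →*_R z (where →*_R is the reflexive-transitive closure of →_R), there exists a word w with y →*_R w and z →*_R w. -/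
open Relation

/-- `→_R` is terminating: there is no infinite sequence of rewriting steps. -/
def Terminating {α : Type*} (R : Set (FreeMonoid α × FreeMonoid α)) : Prop :=
  ¬ ∃ s : ℕ → FreeMonoid α, ∀ n, RwStep R (s n) (s (n + 1))

theorem rtg_whisk {α : Type*} {R : Set (FreeMonoid α × FreeMonoid α)}
    (u v : FreeMonoid α) {x y : FreeMonoid α} (h : ReflTransGen (RwStep R) x y) :
    ReflTransGen (RwStep R) (u * x * v) (u * y * v) :=
  by
  induction h with
  | refl => exact .refl
  | tail _ h ih => exact ih.tail (h.whisk u v)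

theorem joinable_peiffer {α : Type*} {R : Set (FreeMonoid α × FreeMonoid α)}
    (f g : Step R) (h : PeifferOriented f g) : Joinable R f.tgt g.tgt := by
  obtain ⟨v, h1, h2⟩ := h
  refine ⟨f.left * f.rule.2 * v * g.rule.2 * g.right, ReflTransGen.single ?_,
    ReflTransGen.single ?_⟩
  · exact ⟨⟨f.left * f.rule.2 * v, g.rule, g.right, g.rule_mem⟩,
      by simp [Step.src, Step.tgt, h2, mul_assoc], by simp [Step.tgt, mul_assoc]⟩
  · exact ⟨⟨f.left, f.rule, v * g.rule.2 * g.right, f.rule_mem⟩,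
      by simp [Step.src, Step.tgt, h1, mul_assoc], by simp [Step.tgt, mul_assoc]⟩

theorem joinable_overlapping {α : Type*} {R : Set (FreeMonoid α × FreeMonoid α)}
    (hcrit : ∀ f g : Step R, Critical f g → Joinable R f.tgt g.tgt) (n : ℕ) :
    ∀ f g : Step R, f.src.length = n → Overlapping f g → Joinable R f.tgt g.tgt := by
  induction n using Nat.strong_induction_on with
  | _ n ih =>
    intro f g hn hov
    by_cases hc : Critical f g
    · exact hcrit f g hc
    · have : ∃ f' g' : Step R, Overlapping f' g' ∧ BranchLE (f', g') (f, g) ∧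
          (f', g') ≠ (f, g) := by
        by_contra hcon
        refine hc ⟨hov, fun f' g' h1 h2 => ?_⟩
        by_contra h3
        exact hcon ⟨f', g', h1, h2, h3⟩
      obtain ⟨f', g', h1, ⟨u, v, hf, hg⟩, hne⟩ := this
      simp only at hf hg
      have hlt : f'.src.length < n := by
        have hlen : n = u.length + f'.src.length + v.length := by
          rw [← hn, hf]
          simp only [Step.src, Step.whisker, FreeMonoid.length_mul]
          omega
        by_contra hnl
        have hu : u = 1 := FreeMonoid.length_eq_zero.mp (by omega)
        have hv : v = 1 := FreeMonoid.length_eq_zero.mp (by omega)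
        apply hne
        rw [hf, hg, hu, hv]
        simp [Step.whisker]
      obtain ⟨w, hw1, hw2⟩ := ih _ hlt f' g' rfl h1
      refine ⟨u * w * v, ?_, ?_⟩
      · rw [hf, Step.tgt_whisker]
        exact rtg_whisk u v hw1
      · rw [hg, Step.tgt_whisker]
        exact rtg_whisk u v hw2

theorem joinable_local {α : Type*} {R : Set (FreeMonoid α × FreeMonoid α)}
    (hcrit : ∀ f g : Step R, Critical f g → Joinable R f.tgt g.tgt)
    (x y z : FreeMonoid α) (hy : RwStep R x y) (hz : RwStep R x z) : Joinable R y z := by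
  obtain ⟨f, hf, rfl⟩ := hy
  obtain ⟨g, hg, rfl⟩ := hz
  by_cases h : f = g
  · subst h
    exact ⟨_, .refl, .refl⟩
  by_cases hp : Peiffer f g
  · rcases hp with hp | hp
    · exact joinable_peiffer f g hp
    · obtain ⟨w, h1, h2⟩ := joinable_peiffer g f hp
      exact ⟨w, h2, h1⟩
  exact joinable_overlapping hcrit _ f g rfl ⟨hf.trans hg.symm, h, hp⟩

/-- Newman's lemma for string rewriting systems: if `→_R` is terminating and every
critical branching is joinable, then `→_R` is confluent. -/
theorem confluent_of_terminating_of_critical_joinable {α : Type*}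
    (R : Set (FreeMonoid α × FreeMonoid α))
    (hterm : Terminating R)
    (hcrit : ∀ f g : Step R, Critical f g → Joinable R f.tgt g.tgt) :
    ∀ x y z : FreeMonoid α, ReflTransGen (RwStep R) x y → ReflTransGen (RwStep R) x z →
      ∃ w, ReflTransGen (RwStep R) y w ∧ ReflTransGen (RwStep R) z w := by
  have hwf : WellFounded (fun a b => RwStep R b a) := by
    rw [wellFounded_iff_isEmpty_descending_chain]
    exact ⟨fun s => hterm ⟨s.1, s.2⟩⟩
  intro x
  induction x using hwf.induction with
  | _ x ih =>
    intro y z hy hz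
    rcases hy.cases_head with rfl | ⟨y1, hxy1, hy1⟩
    · exact ⟨z, hz, .refl⟩
    rcases hz.cases_head with rfl | ⟨z1, hxz1, hz1⟩
    · exact ⟨y, .refl, hy⟩
    obtain ⟨t, ht1, ht2⟩ := joinable_local hcrit x y1 z1 hxy1 hxz1
    obtain ⟨w, hw1, hw2⟩ := ih y1 hxy1 y t hy1 ht1
    obtain ⟨w', hw1', hw2'⟩ := ih z1 hxz1 w z (ht2.trans hw2) hz1
    exact ⟨w', hw1.trans hw1', hw2'⟩
end

section
/- Let (Σ₀, R) be a string rewriting system. Every overlapping local branching (f, g) can be written as (u·f'·v, u·g'·v) for some critical branching (f', g') and some words u, v ∈ Σ₀*. -/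
open Relation

/-- Every overlapping local branching is the whiskering `(u·f'·v, u·g'·v)`
of some critical branching `(f', g')`. -/
theorem overlapping_factors_through_critical {α : Type*}
    (R : Set (FreeMonoid α × FreeMonoid α)) (f g : Step R) (h : Overlapping f g) :
    ∃ (f' g' : Step R) (u v : FreeMonoid α), Critical f' g' ∧
      f = Step.whisker u f' v ∧ g = Step.whisker u g' v := by
  induction hn : f.left.length + f.right.length using Nat.strong_induction_on
    generalizing f g with
  | _ n ih =>
    by_cases hc : Critical f g
    · exact ⟨f, g, 1, 1, hc, by simp [Step.whisker], by simp [Step.whisker]⟩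
    · have hc2 : ∃ f' g' : Step R, Overlapping f' g' ∧ BranchLE (f', g') (f, g) ∧
          (f', g') ≠ (f, g) := by
        by_contra hcon
        refine hc ⟨h, fun f' g' h1 h2 => ?_⟩
        by_contra h3
        exact hcon ⟨f', g', h1, h2, h3⟩
      obtain ⟨f', g', ho, ⟨u, v, hf, hg⟩, hne⟩ := hc2
      simp only at hf hg
      subst hf hg
      have hlt : f'.left.length + f'.right.length < n := by
        by_contra hge
        simp only [Step.whisker, FreeMonoid.length_mul] at hn
        have hu : u = 1 := FreeMonoid.length_eq_zero.mp (by omega)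
        have hv : v = 1 := FreeMonoid.length_eq_zero.mp (by omega)
        subst hu hv
        exact hne (by simp [Step.whisker])
      obtain ⟨f'', g'', u', v', hcr, h1, h2⟩ := ih _ hlt f' g' ho rfl
      subst h1 h2
      exact ⟨f'', g'', u * u', v' * v, hcr, by simp [Step.whisker, mul_assoc],
        by simp [Step.whisker, mul_assoc]⟩
end
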